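/- Let $f:\mathbb{D}\to\mathbb{D}$ be an injective holomorphic map with $f(0)=0$ and let $w\in\mathbb{D}\setminus\{0\}$. Then $\frac{|w|\,|f'(0)|}{(1+|w|)^2} \leq \frac{|f(w)|}{(1+|f(w)|)^2}$ (lower Pick growth bound for bounded univalent functions). -/

import Mathlib

open Complex Metric

/-!
If `q` is univalent on the unit disc, `q 0 = 0` and `q z * q w ≠ 1` throughout, then `|q'(0)| ≤ 1`
(Bieberbach–Eilenberg). Measure area by `dx dy / |z|²`: by the mean value property of
`(z q'(z) / q z)²`, the image of `ε < |z| < 1` has area at least `2π log ε⁻¹`. That image and its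
inversion are disjoint and avoid the images of the discs of radius `m ≈ |q'(0)| ε` about `0` and
`∞`, so that `2 log ε⁻¹ ≤ 2 log m⁻¹`, that is, `m ≤ ε`.

The Cayley transform turns this into `|s'(0)| ≤ 2 |s 0|` for univalent `s` with `s z + s w ≠ 0`.
Taking for `s` a square root of `g - c` gives the Koebe quarter theorem: `|g'(0)| ≤ 4 |g 0 - c|`
if `g` omits `c`. Precomposing with the conformal map onto the disc slit along the ray from `w`
outwards makes `g w` an omitted value, so that `|w| |g'(0)| / (1 + |w|)² ≤ |g w - g 0|`. For `f`
bounded by `1`, apply this to `g = k ∘ (u f)`, where `k` is the Koebe function and the rotation `u`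
makes `u f(w)` positive.
-/

section

open Filter MeasureTheory Set
open scoped Real Topology

/-! ### Logarithmic area -/

/-- The open annulus of radii `a` and `b` about the origin. -/
def annulus (a b : ℝ) : Set ℂ := {z | ‖z‖ ∈ Ioo a b}

lemma measurableSet_annulus (a b : ℝ) : MeasurableSet (annulus a b) :=
  measurable_norm measurableSet_Ioo

lemma zero_notMem_annulus {a b : ℝ} (ha : 0 ≤ a) : (0 : ℂ) ∉ annulus a b := fun h ↦ by
  simpa using ha.trans_lt h.1

lemma annulus_subset_ball (a b : ℝ) : annulus a b ⊆ ball 0 b := fun _ hz ↦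
  mem_ball_zero_iff.2 hz.2

lemma inv_mem_annulus {a b : ℝ} {z : ℂ} (ha : 0 < a) (hz : z ∈ annulus a b) :
    z⁻¹ ∈ annulus b⁻¹ a⁻¹ := by
  have hz0 : 0 < ‖z‖ := ha.trans hz.1
  rw [annulus, mem_ofPred_eq, norm_inv]
  exact ⟨inv_strictAnti₀ hz0 hz.2, inv_strictAnti₀ ha hz.1⟩

/-- The logarithmic area `dx dy / |z|²`, a measure on the punctured plane invariant under
dilations and inversion. The origin is a null set, so the value `0⁻¹ = 0` of the density there is
harmless. -/
noncomputable def logArea : Measure ℂ := volume.withDensity fun z ↦ ‖z⁻¹‖ₑ ^ 2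

lemma setLIntegral_logArea {s : Set ℂ} (hs : MeasurableSet s) (g : ℂ → ENNReal) :
    ∫⁻ z in s, g z ∂logArea = ∫⁻ z in s, ‖z⁻¹‖ₑ ^ 2 * g z :=
  setLIntegral_withDensity_eq_setLIntegral_mul_non_measurable volume (by fun_prop) g hs
    (ae_of_all _ fun _ ↦ ENNReal.pow_lt_top enorm_lt_top)

lemma ofReal_abs_det_restrictScalars_toSpanSingleton (a : ℂ) :
    ENNReal.ofReal |((ContinuousLinearMap.toSpanSingleton ℂ a).restrictScalars ℝ).det| =
      ‖a‖ₑ ^ 2 := by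
  rw [← ofReal_norm, ← ENNReal.ofReal_pow (norm_nonneg a)]
  simp [ContinuousLinearMap.det, LinearMap.det_restrictScalars,
    Algebra.norm_complex_eq, Complex.normSq_eq_norm_sq]

lemma logArea_image {f : ℂ → ℂ} {s : Set ℂ} (hs : MeasurableSet s) (h0 : 0 ∉ s)
    (hf : ∀ z ∈ s, DifferentiableAt ℂ f z) (hinj : InjOn f s) :
    logArea (f '' s) = ∫⁻ z in s, ‖z * logDeriv f z‖ₑ ^ 2 ∂logArea := by
  rw [logArea, withDensity_apply', ← logArea, setLIntegral_logArea hs,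
    lintegral_image_eq_lintegral_abs_det_fderiv_mul volume hs
      (fun z hz ↦ ((hf z hz).hasDerivAt.hasFDerivAt.restrictScalars ℝ).hasFDerivWithinAt) hinj]
  refine setLIntegral_congr_fun hs fun z hz ↦ ?_
  have hz0 : z ≠ 0 := ne_of_mem_of_not_mem hz h0
  simp only [ofReal_abs_det_restrictScalars_toSpanSingleton, ← mul_pow, ← enorm_mul]
  rw [inv_mul_cancel_left₀ hz0, logDeriv_apply, div_eq_mul_inv]

lemma logArea_image_inv {s : Set ℂ} (hs : MeasurableSet s) (h0 : 0 ∉ s) :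
    logArea (Inv.inv '' s) = logArea s := by
  have hne : ∀ z ∈ s, z ≠ 0 := fun z hz ↦ ne_of_mem_of_not_mem hz h0
  rw [logArea_image hs h0 (fun z hz ↦ differentiableAt_inv (hne z hz)) inv_injective.injOn,
    ← setLIntegral_one]
  refine setLIntegral_congr_fun hs fun z hz ↦ ?_
  have := hne z hz
  have h : z * logDeriv Inv.inv z = -1 := by
    rw [logDeriv_apply, deriv_inv]
    field_simp
  simp only [h, enorm_neg, enorm_one, one_pow]

lemma lintegral_logArea_eq_lintegral_circleMap (g : ℂ → ENNReal) :
    ∫⁻ z, g z ∂logArea =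
      ∫⁻ p in Ioi (0 : ℝ) ×ˢ Ioo (-π) π, ENNReal.ofReal p.1⁻¹ * g (circleMap 0 p.1 p.2) := by
  rw [← setLIntegral_univ, setLIntegral_logArea MeasurableSet.univ, setLIntegral_univ,
    ← Complex.lintegral_comp_polarCoord_symm, polarCoord_target]
  refine setLIntegral_congr_fun (measurableSet_Ioi.prod measurableSet_Ioo) fun p hp ↦ ?_
  have hp0 : 0 < p.1 := hp.1
  have hsymm : Complex.polarCoord.symm p = circleMap 0 p.1 p.2 := by
    rw [circleMap_zero, exp_mul_I, Complex.polarCoord_symm_apply]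
    push_cast
    rfl
  have hdensity : ENNReal.ofReal p.1 * ‖(circleMap 0 p.1 p.2)⁻¹‖ₑ ^ 2 =
      ENNReal.ofReal p.1⁻¹ := by
    rw [← ofReal_norm, ← ENNReal.ofReal_pow (norm_nonneg _), ← ENNReal.ofReal_mul hp0.le,
      norm_inv, norm_circleMap_zero, abs_of_pos hp0]
    congr 1
    field_simp
  simp only [hsymm, smul_eq_mul, ← mul_assoc, hdensity]

lemma setLIntegral_annulus_logArea {a b : ℝ} (ha : 0 ≤ a) {g : ℂ → ENNReal}
    (hg : ContinuousOn g (annulus a b)) :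
    ∫⁻ z in annulus a b, g z ∂logArea =
      ∫⁻ r in Ioo a b, ENNReal.ofReal r⁻¹ * ∫⁻ θ in Ioo (-π) π, g (circleMap 0 r θ) := by
  set S : Set (ℝ × ℝ) := Ioo a b ×ˢ Ioo (-π) π with hS_def
  have hS : MeasurableSet S := measurableSet_Ioo.prod measurableSet_Ioo
  have hS_sub : S ⊆ Ioi 0 ×ˢ Ioo (-π) π := fun p hp ↦ ⟨ha.trans_lt hp.1.1, hp.2⟩
  have hmem {p : ℝ × ℝ} (hp : p ∈ Ioi 0 ×ˢ Ioo (-π) π) :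
      circleMap 0 p.1 p.2 ∈ annulus a b ↔ p ∈ S := by
    simp only [annulus, mem_ofPred_eq, norm_circleMap_zero, abs_of_pos (mem_Ioi.1 hp.1), hS_def,
      mem_prod, hp.2, and_true]
  have hg_polar : ContinuousOn (fun p : ℝ × ℝ ↦ g (circleMap 0 p.1 p.2)) S :=
    hg.comp (by fun_prop) fun p hp ↦ (hmem (hS_sub hp)).2 hp
  calc ∫⁻ z in annulus a b, g z ∂logArea
      = ∫⁻ p in Ioi 0 ×ˢ Ioo (-π) π, S.indicator
          (fun p ↦ ENNReal.ofReal p.1⁻¹ * g (circleMap 0 p.1 p.2)) p := by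
        rw [← lintegral_indicator (measurableSet_annulus a b),
          lintegral_logArea_eq_lintegral_circleMap]
        refine setLIntegral_congr_fun (measurableSet_Ioi.prod measurableSet_Ioo) fun p hp ↦ ?_
        by_cases h : p ∈ S
        · simp only [indicator_of_mem ((hmem hp).2 h), indicator_of_mem h]
        · simp only [indicator_of_notMem (mt (hmem hp).1 h), indicator_of_notMem h, mul_zero]
    _ = ∫⁻ p in S, ENNReal.ofReal p.1⁻¹ * g (circleMap 0 p.1 p.2) := by
        rw [setLIntegral_indicator hS, inter_eq_left.2 hS_sub]
    _ = ∫⁻ r in Ioo a b, ENNReal.ofReal r⁻¹ * ∫⁻ θ in Ioo (-π) π, g (circleMap 0 r θ) := by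
        have hmeas : AEMeasurable (fun p : ℝ × ℝ ↦ ENNReal.ofReal p.1⁻¹ * g (circleMap 0 p.1 p.2))
            (volume.restrict S) :=
          (by fun_prop : Measurable fun p : ℝ × ℝ ↦ ENNReal.ofReal p.1⁻¹).aemeasurable.mul
            (hg_polar.aemeasurable hS)
        rw [Measure.volume_eq_prod, ← Measure.prod_restrict] at hmeas ⊢
        rw [lintegral_prod _ hmeas]
        simp only [lintegral_const_mul' _ _ ENNReal.ofReal_ne_top]

lemma setLIntegral_Ioo_ofReal_inv {a b : ℝ} (ha : 0 < a) (hb : 0 < b) :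
    ∫⁻ r in Ioo a b, ENNReal.ofReal r⁻¹ = ENNReal.ofReal (Real.log (b / a)) := by
  rcases le_total a b with hab | hba
  · have hint : IntegrableOn (fun r : ℝ ↦ r⁻¹) (Ioo a b) :=
      (intervalIntegrable_inv_iff.2 (.inr (notMem_uIcc_of_lt ha hb))).1.mono_set
        Ioo_subset_Ioc_self
    rw [← integral_inv_of_pos ha hb, intervalIntegral.integral_of_le hab,
      integral_Ioc_eq_integral_Ioo, ofReal_integral_eq_lintegral_ofReal hint]
    filter_upwards [ae_restrict_mem measurableSet_Ioo] with r hr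
    exact (inv_pos.2 (ha.trans hr.1)).le
  · rw [Ioo_eq_empty hba.not_gt, setLIntegral_empty, ENNReal.ofReal_of_nonpos]
    exact Real.log_nonpos (by positivity) ((div_le_one ha).2 hba)

lemma logArea_annulus {a b : ℝ} (ha : 0 < a) (hb : 0 < b) :
    logArea (annulus a b) = ENNReal.ofReal (2 * π) * ENNReal.ofReal (Real.log (b / a)) := by
  rw [← setLIntegral_one, setLIntegral_annulus_logArea ha.le continuousOn_const]
  simp only [setLIntegral_one, Real.volume_Ioo, sub_neg_eq_add, ← two_mul]
  rw [lintegral_mul_const' _ _ ENNReal.ofReal_ne_top, setLIntegral_Ioo_ofReal_inv ha hb, mul_comm]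

lemma ofReal_two_pi_mul_enorm_le_lintegral_circleMap {E : Type*} [NormedAddCommGroup E]
    [NormedSpace ℂ E] [CompleteSpace E] {F : ℂ → E} {c : ℂ} {R : ℝ}
    (hF : DiffContOnCl ℂ F (ball c |R|)) :
    ENNReal.ofReal (2 * π) * ‖F c‖ₑ ≤ ∫⁻ θ in Ioo (-π) π, ‖F (circleMap c R θ)‖ₑ := by
  have hmean : (2 * π) • F c = ∫ θ in Ioo (-π) π, F (circleMap c R θ) := by
    rw [← hF.circleAverage, Real.circleAverage_eq_integral_add (-π), smul_inv_smul₀ (by positivity),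
      intervalIntegral.integral_comp_add_right fun θ ↦ F (circleMap c R θ),
      intervalIntegral.integral_of_le (by linarith [Real.pi_pos]), integral_Ioc_eq_integral_Ioo]
    ring_nf
  calc ENNReal.ofReal (2 * π) * ‖F c‖ₑ = ‖(2 * π) • F c‖ₑ := by
        rw [enorm_smul, Real.enorm_of_nonneg (by positivity)]
    _ ≤ ∫⁻ θ in Ioo (-π) π, ‖F (circleMap c R θ)‖ₑ := hmean ▸ enorm_integral_le_lintegral_enorm _

lemma logArea_annulus_mul_enorm_le {E : Type*} [NormedAddCommGroup E]
    [NormedSpace ℂ E] [CompleteSpace E] {F : ℂ → E} {a b : ℝ} (ha : 0 ≤ a)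
    (hF : DifferentiableOn ℂ F (ball 0 b)) :
    logArea (annulus a b) * ‖F 0‖ₑ ≤ ∫⁻ z in annulus a b, ‖F z‖ₑ ∂logArea := by
  rw [← setLIntegral_one, setLIntegral_annulus_logArea ha continuousOn_const,
    setLIntegral_annulus_logArea ha (hF.continuousOn.mono (annulus_subset_ball a b)).enorm]
  simp only [setLIntegral_one, Real.volume_Ioo, sub_neg_eq_add, ← two_mul]
  rw [← lintegral_mul_const' _ _ enorm_ne_top]
  refine setLIntegral_mono' measurableSet_Ioo fun r hr ↦ ?_
  rw [mul_assoc]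
  gcongr
  refine ofReal_two_pi_mul_enorm_le_lintegral_circleMap (hF.mono ?_).diffContOnCl
  refine closure_ball_subset_closedBall.trans (closedBall_subset_ball ?_)
  rw [abs_of_pos (ha.trans_lt hr.1)]
  exact hr.2

/-- A univalent function on `U`: holomorphic and injective there. The values of `f` off `U` are
arbitrary. -/
structure IsUnivalentOn (f : ℂ → ℂ) (U : Set ℂ) : Prop where
  differentiableOn : DifferentiableOn ℂ f U
  injOn : InjOn f U

namespace IsUnivalentOn

variable {f g : ℂ → ℂ} {U V : Set ℂ}

lemma mono (hf : IsUnivalentOn f V) (h : U ⊆ V) : IsUnivalentOn f U :=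
  ⟨hf.differentiableOn.mono h, hf.injOn.mono h⟩

lemma comp (hg : IsUnivalentOn g V) (hf : IsUnivalentOn f U) (h : MapsTo f U V) :
    IsUnivalentOn (g ∘ f) U :=
  ⟨hg.differentiableOn.comp hf.differentiableOn h, hg.injOn.comp hf.injOn h⟩

lemma const_mul (hf : IsUnivalentOn f U) {c : ℂ} (hc : c ≠ 0) : IsUnivalentOn (fun z ↦ c * f z) U :=
  ⟨hf.differentiableOn.const_mul c, fun _ hz _ hw h ↦ hf.injOn hz hw (mul_left_cancel₀ hc h)⟩

lemma const_add (hf : IsUnivalentOn f U) (c : ℂ) : IsUnivalentOn (fun z ↦ c + f z) U :=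
  ⟨hf.differentiableOn.const_add c, fun _ hz _ hw h ↦ hf.injOn hz hw (add_left_cancel h)⟩

lemma hasDerivAt (hf : IsUnivalentOn f U) {z : ℂ} (hU : U ∈ 𝓝 z) : HasDerivAt f (deriv f z) z :=
  (hf.differentiableOn.differentiableAt hU).hasDerivAt

end IsUnivalentOn

/-! ### The Bieberbach–Eilenberg inequality -/

lemma eventually_closedBall_subset_image_of_hasStrictDerivAt {𝕜 : Type*}
    [NontriviallyNormedField 𝕜] [CompleteSpace 𝕜] {q : 𝕜 → 𝕜} {a x : 𝕜}
    (hq : HasStrictDerivAt q a x) {c : ℝ} (hca : c < ‖a‖) :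
    ∀ᶠ ε in 𝓝[>] (0 : ℝ), closedBall (q x) (c * ε) ⊆ q '' closedBall x ε := by
  rcases lt_or_ge c 0 with hc | hc
  · filter_upwards [self_mem_nhdsWithin] with ε hε
    rw [closedBall_eq_empty.2 (mul_neg_of_neg_of_pos hc hε)]
    exact empty_subset _
  have ha : a ≠ 0 := norm_pos_iff.1 (hc.trans_lt hca)
  let inverse : (ContinuousLinearMap.toSpanSingleton 𝕜 a).NonlinearRightInverse :=
    { toFun := fun y ↦ y * a⁻¹
      nnnorm := ‖a‖₊⁻¹
      bound' := fun y ↦ by simp [mul_comm]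
      right_inv' := fun y ↦ by simp [ha] }
  obtain ⟨s, hs, happrox⟩ := hq.hasStrictFDerivAt.approximates_deriv_on_nhds
    (c := (‖a‖ - c).toNNReal) (.inr (Real.toNNReal_pos.2 (sub_pos.2 hca)))
  obtain ⟨r, hr, hball⟩ := nhds_basis_closedBall.mem_iff.1 hs
  filter_upwards [Ioo_mem_nhdsGT hr] with ε hε
  have hsurj := happrox.surjOn_closedBall_of_nonlinearRightInverse inverse hε.1.le
    ((closedBall_subset_closedBall hε.2.le).trans hball)
  rwa [Real.coe_toNNReal _ (sub_nonneg.2 hca.le), NNReal.coe_inv, inv_inv, coe_nnnorm,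
    sub_sub_cancel] at hsurj

section Eilenberg

variable {q : ℂ → ℂ}

lemma IsUnivalentOn.logArea_annulus_le (hq : IsUnivalentOn q (ball 0 1)) (h0 : q 0 = 0)
    (hq' : deriv q 0 ≠ 0) {ε : ℝ} (hε : 0 ≤ ε) :
    logArea (annulus ε 1) ≤ logArea (q '' annulus ε 1) := by
  have hsub := annulus_subset_ball ε 1
  have hdslope : ∀ z ∈ ball (0 : ℂ) 1, dslope q 0 z ≠ 0 := by
    intro z hz
    rcases eq_or_ne z 0 with rfl | hz0
    · rwa [dslope_same]
    · rw [dslope_of_ne _ hz0, slope_def_field, h0, sub_zero, sub_zero]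
      exact div_ne_zero (h0 ▸ hq.injOn.ne hz (mem_ball_self one_pos) hz0) hz0
  set F : ℂ → ℂ := fun z ↦ (deriv q z / dslope q 0 z) ^ 2 with hF_def
  have hF : DifferentiableOn ℂ F (ball 0 1) :=
    ((hq.differentiableOn.deriv isOpen_ball).div
      ((differentiableOn_dslope (ball_mem_nhds _ one_pos)).2 hq.differentiableOn) hdslope).pow 2
  have hF0 : ‖F 0‖ₑ = 1 := by
    simp only [hF_def, dslope_same, div_self hq', one_pow, enorm_one]
  calc logArea (annulus ε 1) = logArea (annulus ε 1) * ‖F 0‖ₑ := by rw [hF0, mul_one]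
    _ ≤ ∫⁻ z in annulus ε 1, ‖F z‖ₑ ∂logArea := logArea_annulus_mul_enorm_le hε hF
    _ = ∫⁻ z in annulus ε 1, ‖z * logDeriv q z‖ₑ ^ 2 ∂logArea := by
      refine setLIntegral_congr_fun (measurableSet_annulus ε 1) fun z hz ↦ ?_
      have hz0 : z ≠ 0 := ne_of_mem_of_not_mem hz (zero_notMem_annulus hε)
      have hratio : deriv q z / dslope q 0 z = z * logDeriv q z := by
        rw [dslope_of_ne _ hz0, slope_def_field, h0, sub_zero, sub_zero, div_div_eq_mul_div,
          logDeriv_apply, mul_comm (deriv q z), mul_div_assoc]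
      simp only [hF_def, hratio, enorm_pow]
    _ = logArea (q '' annulus ε 1) :=
      (logArea_image (measurableSet_annulus ε 1) (zero_notMem_annulus hε)
        (fun z hz ↦ (hq.hasDerivAt (isOpen_ball.mem_nhds (hsub hz))).differentiableAt)
        (hq.injOn.mono hsub)).symm

lemma IsUnivalentOn.image_annulus_subset (hq : IsUnivalentOn q (ball 0 1))
    (hmul : ∀ z ∈ ball (0 : ℂ) 1, ∀ w ∈ ball (0 : ℂ) 1, q z * q w ≠ 1) {m ε : ℝ} (hm : 0 < m)
    (hε : ε < 1) (hball : closedBall 0 m ⊆ q '' closedBall 0 ε) :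
    q '' annulus ε 1 ⊆ annulus m m⁻¹ := by
  have hsub : closedBall (0 : ℂ) ε ⊆ ball 0 1 := closedBall_subset_ball hε
  rintro _ ⟨z, hz, rfl⟩
  have hz1 : z ∈ ball (0 : ℂ) 1 := annulus_subset_ball ε 1 hz
  have hlower : m < ‖q z‖ := by
    by_contra! h
    obtain ⟨w, hw, hwz⟩ := hball (mem_closedBall_zero_iff.2 h)
    obtain rfl := hq.injOn (hsub hw) hz1 hwz
    exact (mem_closedBall_zero_iff.1 hw).not_gt hz.1
  have hupper : m < ‖(q z)⁻¹‖ := by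
    by_contra! h
    obtain ⟨w, hw, hwz⟩ := hball (mem_closedBall_zero_iff.2 h)
    refine hmul z hz1 w (hsub hw) ?_
    rw [hwz, mul_inv_cancel₀ (norm_pos_iff.1 (hm.trans hlower))]
  refine ⟨hlower, ?_⟩
  rwa [norm_inv, lt_inv_comm₀ hm (hm.trans hlower)] at hupper

theorem IsUnivalentOn.le_of_closedBall_subset_image (hq : IsUnivalentOn q (ball 0 1))
    (h0 : q 0 = 0) (hq' : deriv q 0 ≠ 0)
    (hmul : ∀ z ∈ ball (0 : ℂ) 1, ∀ w ∈ ball (0 : ℂ) 1, q z * q w ≠ 1) {m ε : ℝ} (hε0 : 0 < ε)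
    (hε1 : ε < 1) (hball : closedBall 0 m ⊆ q '' closedBall 0 ε) : m ≤ ε := by
  rcases le_or_gt m 0 with hm | hm
  · exact hm.trans hε0.le
  set Ω := q '' annulus ε 1
  have hsub : annulus ε 1 ⊆ ball 0 1 := annulus_subset_ball ε 1
  have hΩ_sub : Ω ⊆ annulus m m⁻¹ := hq.image_annulus_subset hmul hm hε1 hball
  have hinv_sub : Inv.inv '' Ω ⊆ annulus m m⁻¹ := by
    rintro _ ⟨ζ, hζ, rfl⟩
    simpa only [inv_inv] using inv_mem_annulus hm (hΩ_sub hζ)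
  have hΩ0 : 0 ∉ Ω := fun h ↦ zero_notMem_annulus hm.le (hΩ_sub h)
  have hΩ_meas : MeasurableSet Ω :=
    (measurableSet_annulus ε 1).image_of_continuousOn_injOn
      (hq.differentiableOn.continuousOn.mono hsub) (hq.injOn.mono hsub)
  have hdisj : Disjoint (Inv.inv '' Ω) Ω := by
    rw [Set.disjoint_left]
    rintro _ ⟨_, ⟨z, hz, rfl⟩, rfl⟩ ⟨w, hw, hwz⟩
    refine hmul z (hsub hz) w (hsub hw) ?_
    rw [hwz, mul_inv_cancel₀ (ne_of_mem_of_not_mem (mem_image_of_mem q hz) hΩ0)]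
  have harea : 2 * logArea (annulus ε 1) ≤ logArea (annulus m m⁻¹) :=
    calc 2 * logArea (annulus ε 1) ≤ logArea Ω + logArea Ω := by
          rw [two_mul]
          exact add_le_add (hq.logArea_annulus_le h0 hq' hε0.le)
            (hq.logArea_annulus_le h0 hq' hε0.le)
      _ = logArea (Inv.inv '' Ω ∪ Ω) := by
          rw [measure_union hdisj hΩ_meas, logArea_image_inv hΩ_meas hΩ0]
      _ ≤ logArea (annulus m m⁻¹) := measure_mono (union_subset hinv_sub hΩ_sub)
  have hlog : 2 * Real.log ε⁻¹ ≤ Real.log (m⁻¹ / m) := by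
    rw [logArea_annulus hε0 one_pos, logArea_annulus hm (inv_pos.2 hm), mul_left_comm,
      ENNReal.mul_le_mul_iff_right (by simpa using Real.pi_pos) ENNReal.ofReal_ne_top, one_div,
      ← ENNReal.ofReal_ofNat 2, ← ENNReal.ofReal_mul zero_le_two] at harea
    exact ((ENNReal.ofReal_le_ofReal_iff'.1 harea).resolve_right fun h ↦
      (mul_pos two_pos (Real.log_pos ((one_lt_inv₀ hε0).2 hε1))).not_ge h)
  rw [Real.log_div (inv_pos.2 hm).ne' hm.ne', Real.log_inv, Real.log_inv] at hlog
  exact (Real.log_le_log_iff hm hε0).1 (by linarith)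

theorem IsUnivalentOn.norm_deriv_le_one_of_mul_ne_one (hq : IsUnivalentOn q (ball 0 1))
    (h0 : q 0 = 0) (hmul : ∀ z ∈ ball (0 : ℂ) 1, ∀ w ∈ ball (0 : ℂ) 1, q z * q w ≠ 1) :
    ‖deriv q 0‖ ≤ 1 := by
  by_contra! h
  obtain ⟨c, hc1, hc⟩ := exists_between h
  have hstrict : HasStrictDerivAt q (deriv q 0) 0 :=
    (hq.differentiableOn.analyticAt (ball_mem_nhds 0 one_pos)).hasStrictDerivAt
  obtain ⟨ε, hball, hε0, hε1⟩ :=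
    ((eventually_closedBall_subset_image_of_hasStrictDerivAt hstrict hc).and
      (Ioo_mem_nhdsGT one_pos)).exists
  rw [h0] at hball
  have hq' : deriv q 0 ≠ 0 := norm_pos_iff.1 (one_pos.trans h)
  have : c * ε ≤ ε := hq.le_of_closedBall_subset_image h0 hq' hmul hε0 hε1 hball
  exact (lt_mul_of_one_lt_left hε0 hc1).not_ge this

end Eilenberg

/-! ### The Cayley transform -/

section Cayley

/-- The Cayley transform `z ↦ (1 - z) / (1 + z)`, an involution interchanging the unit disc and the
right half-plane. At the pole `-1` it takes the junk value `0`. -/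
noncomputable def cayley (z : ℂ) : ℂ := (1 - z) / (1 + z)

variable {z w : ℂ}

lemma cayley_zero : cayley 0 = 1 := by simp [cayley]

lemma cayley_one : cayley 1 = 0 := by simp [cayley]

lemma one_add_ne_zero_of_mem_ball (hz : z ∈ ball (0 : ℂ) 1) : 1 + z ≠ 0 := fun h ↦ by
  simp [eq_neg_of_add_eq_zero_right h] at hz

lemma one_add_ne_zero_of_re_pos (hz : 0 < z.re) : 1 + z ≠ 0 := fun h ↦ by
  have := congrArg re h
  simp only [add_re, one_re, zero_re] at this
  linarith

lemma one_add_cayley (hz : 1 + z ≠ 0) : 1 + cayley z = 2 / (1 + z) := by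
  rw [cayley]
  field_simp
  ring

lemma one_add_cayley_ne_zero (hz : 1 + z ≠ 0) : 1 + cayley z ≠ 0 :=
  one_add_cayley hz ▸ div_ne_zero two_ne_zero hz

lemma cayley_cayley (hz : 1 + z ≠ 0) : cayley (cayley z) = z := by
  rw [cayley, one_add_cayley hz, cayley]
  field_simp
  ring

lemma add_eq_zero_of_cayley_mul_cayley_eq_one (hz : 1 + z ≠ 0) (hw : 1 + w ≠ 0)
    (h : cayley z * cayley w = 1) : z + w = 0 := by
  rw [cayley, cayley, div_mul_div_comm, div_eq_one_iff_eq (mul_ne_zero hz hw)] at h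
  linear_combination -h / 2

lemma hasDerivAt_cayley (hz : 1 + z ≠ 0) : HasDerivAt cayley (-2 / (1 + z) ^ 2) z := by
  convert! ((hasDerivAt_id z).const_sub 1).div ((hasDerivAt_id z).const_add 1) hz using 1
  simp only [id]
  ring

lemma isUnivalentOn_cayley : IsUnivalentOn cayley {z | 1 + z ≠ 0} where
  differentiableOn _ hz := (hasDerivAt_cayley hz).differentiableAt.differentiableWithinAt
  injOn _ hz _ hw h := by rw [← cayley_cayley hz, h, cayley_cayley hw]

lemma re_cayley (z : ℂ) : (cayley z).re = (1 - ‖z‖ ^ 2) / ‖1 + z‖ ^ 2 := by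
  rw [cayley, div_re, ← add_div, ← normSq_eq_norm_sq, ← normSq_eq_norm_sq, normSq_apply z]
  simp only [sub_re, add_re, sub_im, add_im, one_re, one_im]
  ring

lemma re_cayley_pos_iff (hz : 1 + z ≠ 0) : 0 < (cayley z).re ↔ z ∈ ball (0 : ℂ) 1 := by
  rw [re_cayley, div_pos_iff_of_pos_right (by positivity), sub_pos, sq_lt_one_iff_abs_lt_one,
    abs_norm, mem_ball_zero_iff]

lemma mapsTo_cayley_ball : MapsTo cayley (ball 0 1) {ζ | 0 < ζ.re} := fun _ hz ↦
  (re_cayley_pos_iff (one_add_ne_zero_of_mem_ball hz)).2 hz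

lemma mapsTo_cayley_re_pos : MapsTo cayley {ζ | 0 < ζ.re} (ball 0 1) := fun ζ hζ ↦ by
  have hζ1 : 1 + ζ ≠ 0 := one_add_ne_zero_of_re_pos hζ
  rw [← re_cayley_pos_iff (one_add_cayley_ne_zero hζ1), cayley_cayley hζ1]
  exact hζ

end Cayley

/-! ### The Koebe quarter theorem -/

section Quarter

/-- Normalised by `s 0 = 1`, the Cayley transform carries `s z + s w ≠ 0` to `q z * q w ≠ 1`. -/
theorem IsUnivalentOn.norm_deriv_le_of_add_ne_zero {s : ℂ → ℂ} (hs : IsUnivalentOn s (ball 0 1))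
    (hadd : ∀ z ∈ ball (0 : ℂ) 1, ∀ w ∈ ball (0 : ℂ) 1, s z + s w ≠ 0) :
    ‖deriv s 0‖ ≤ 2 * ‖s 0‖ := by
  have h0 : (0 : ℂ) ∈ ball (0 : ℂ) 1 := mem_ball_self one_pos
  have hs0 : s 0 ≠ 0 := fun h ↦ hadd 0 h0 0 h0 (by rw [h, add_zero])
  set S : ℂ → ℂ := fun z ↦ (s 0)⁻¹ * s z with hS_def
  have hS0 : S 0 = 1 := inv_mul_cancel₀ hs0
  have hS : IsUnivalentOn S (ball 0 1) := hs.const_mul (inv_ne_zero hs0)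
  have hS_add {z w : ℂ} (hz : z ∈ ball 0 1) (hw : w ∈ ball 0 1) : S z + S w ≠ 0 := by
    rw [hS_def, ← mul_add]
    exact mul_ne_zero (inv_ne_zero hs0) (hadd z hz w hw)
  have hS_one {z : ℂ} (hz : z ∈ ball 0 1) : 1 + S z ≠ 0 := hS0 ▸ hS_add h0 hz
  have hq : IsUnivalentOn (cayley ∘ S) (ball 0 1) := isUnivalentOn_cayley.comp hS fun _ ↦ hS_one
  have hderiv : HasDerivAt (cayley ∘ S) (-(2 * s 0)⁻¹ * deriv s 0) 0 := by
    convert! (hasDerivAt_cayley (hS_one h0)).comp 0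
      ((hs.hasDerivAt (ball_mem_nhds 0 one_pos)).const_mul (s 0)⁻¹) using 1
    rw [hS0, mul_inv]
    ring
  have hle := hq.norm_deriv_le_one_of_mul_ne_one (by simp only [Function.comp, hS0, cayley_one])
    fun z hz w hw h ↦ hS_add hz hw
      (add_eq_zero_of_cayley_mul_cayley_eq_one (hS_one hz) (hS_one hw) h)
  rwa [hderiv.deriv, norm_mul, norm_neg, norm_inv, norm_mul, norm_ofNat,
    inv_mul_le_one₀ (by positivity)] at hle

lemma exists_differentiableOn_sq_eq {U : Set ℂ} (hUc : IsSimplyConnected U) (hU : IsOpen U)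
    {g : ℂ → ℂ} (hg : DifferentiableOn ℂ g U) (hg0 : ∀ z ∈ U, g z ≠ 0) :
    ∃ s : ℂ → ℂ, DifferentiableOn ℂ s U ∧ ∀ z, s z ^ 2 = g z := by
  obtain ⟨s, hs, hsq⟩ := exists_continuousOn_pow_eq hUc hU hg.continuousOn
    (fun ⟨z, hz, h⟩ ↦ hg0 z hz h) two_ne_zero
  refine ⟨s, fun z hz ↦ ?_, hsq⟩
  have hsz : s z ≠ 0 := fun h ↦ hg0 z hz (by rw [← hsq, h, zero_pow two_ne_zero])
  exact (HasDerivAt.of_comp_left (hs.continuousAt (hU.mem_nhds hz)) (hasDerivAt_pow 2 (s z))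
    (hg.differentiableAt (hU.mem_nhds hz)).hasDerivAt (by simpa using hsz)
    (.of_forall hsq)).differentiableAt.differentiableWithinAt

lemma isSimplyConnected_of_convex {E : Type*} [AddCommGroup E] [Module ℝ E] [TopologicalSpace E]
    [ContinuousAdd E] [ContinuousSMul ℝ E] {s : Set E} (hs : Convex ℝ s) (hne : s.Nonempty) :
    IsSimplyConnected s :=
  have := hs.contractibleSpace hne
  SimplyConnectedSpace.ofContractible s

theorem IsUnivalentOn.norm_deriv_le_four_mul_norm_sub {g : ℂ → ℂ}
    (hg : IsUnivalentOn g (ball 0 1)) {c : ℂ} (hc : c ∉ g '' ball 0 1) :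
    ‖deriv g 0‖ ≤ 4 * ‖g 0 - c‖ := by
  have h0 : (0 : ℂ) ∈ ball (0 : ℂ) 1 := mem_ball_self one_pos
  have hne : ∀ z ∈ ball (0 : ℂ) 1, g z - c ≠ 0 := fun z hz h ↦ hc ⟨z, hz, sub_eq_zero.1 h⟩
  obtain ⟨s, hs_diff, hsq⟩ := exists_differentiableOn_sq_eq
    (isSimplyConnected_of_convex (convex_ball 0 1) ⟨0, h0⟩) isOpen_ball
    (hg.differentiableOn.sub_const c) hne
  have hinj {z w : ℂ} (hz : z ∈ ball 0 1) (hw : w ∈ ball 0 1) (h : s z ^ 2 = s w ^ 2) : z = w :=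
    hg.injOn hz hw (sub_left_injective (by simpa only [hsq] using h))
  have hs : IsUnivalentOn s (ball 0 1) := ⟨hs_diff, fun z hz w hw h ↦ hinj hz hw (by rw [h])⟩
  have hadd : ∀ z ∈ ball (0 : ℂ) 1, ∀ w ∈ ball (0 : ℂ) 1, s z + s w ≠ 0 := by
    intro z hz w hw h
    have hzw : z = w := hinj hz hw (by linear_combination (s z - s w) * h)
    have hsz : s z = 0 := by
      rw [← hzw] at h
      exact self_eq_neg.1 (eq_neg_of_add_eq_zero_left h)
    exact hne z hz (by rw [← hsq, hsz, zero_pow two_ne_zero])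
  have hderiv : deriv g 0 = 2 * s 0 * deriv s 0 := by
    have hpow := (hs.hasDerivAt (ball_mem_nhds 0 one_pos)).pow 2
    have hsub := (hg.hasDerivAt (ball_mem_nhds 0 one_pos)).sub_const c
    rw [show s ^ 2 = fun z ↦ g z - c from funext hsq] at hpow
    simpa using hsub.unique hpow
  calc ‖deriv g 0‖ = 2 * ‖s 0‖ * ‖deriv s 0‖ := by simp only [hderiv, norm_mul, norm_ofNat]
    _ ≤ 2 * ‖s 0‖ * (2 * ‖s 0‖) := by
      gcongr
      exact hs.norm_deriv_le_of_add_ne_zero hadd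
    _ = 4 * ‖g 0 - c‖ := by
      rw [← hsq, norm_pow]
      ring

end Quarter

/-! ### Conformal maps onto slit domains -/

section SlitMap

lemma mapsTo_sq_re_pos : MapsTo (fun ζ : ℂ ↦ ζ ^ 2) {ζ | 0 < ζ.re} slitPlane := fun ζ hζ ↦ by
  simp only [mem_slitPlane_iff, pow_two, mul_re, mul_im]
  rcases eq_or_ne ζ.im 0 with h | h
  · exact .inl (by simpa [h] using (ne_of_gt hζ : ζ.re ≠ 0))
  · right
    rw [mul_comm ζ.im, ← two_mul]
    exact mul_ne_zero two_ne_zero (mul_ne_zero (ne_of_gt hζ) h)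

lemma isUnivalentOn_sq_re_pos : IsUnivalentOn (fun ζ ↦ ζ ^ 2) {ζ | 0 < ζ.re} where
  differentiableOn := differentiableOn_pow 2
  injOn z hz w hw h := by
    refine (sq_eq_sq_iff_eq_or_eq_neg.1 h).resolve_right fun hneg ↦ ?_
    have hre : z.re = -w.re := by rw [hneg, neg_re]
    linarith [show 0 < z.re from hz, show 0 < w.re from hw]

lemma complexSqrt_sq (z : ℂ) : z.sqrt ^ 2 = z := cpow_ofNat_inv_pow z 2

lemma mapsTo_complexSqrt_slitPlane : MapsTo Complex.sqrt slitPlane {ζ | 0 < ζ.re} := fun z hz ↦ by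
  have hpos : 0 < ‖z‖ + z.re := by
    rcases mem_slitPlane_iff.1 hz with h | h
    · positivity
    · linarith [(abs_lt.1 (abs_re_lt_norm.2 h)).1]
  rw [mem_ofPred_eq, Complex.sqrt, cpow_inv_two_re]
  exact Real.sqrt_pos.2 (half_pos hpos)

lemma isUnivalentOn_complexSqrt_slitPlane : IsUnivalentOn Complex.sqrt slitPlane where
  differentiableOn := differentiableOn_sqrt
  injOn z _ w _ h := by rw [← complexSqrt_sq z, h, complexSqrt_sq]

lemma ofReal_add_ofReal_mul_mem_slitPlane {a b : ℝ} {z : ℂ} (ha : 0 ≤ a) (hb : 0 < b)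
    (hz : z ∈ slitPlane) : a + b * z ∈ slitPlane := by
  rw [mem_slitPlane_iff] at hz ⊢
  simp only [add_re, add_im, ofReal_re, ofReal_im, re_ofReal_mul, im_ofReal_mul, zero_add]
  exact hz.imp (fun h ↦ by positivity) (mul_ne_zero hb.ne')

/-- The conformal map of the right half-plane onto the right half-plane slit along `(0, t]`,
fixing `1`, for `0 < t < 1`. -/
noncomputable def halfPlaneSlitMap (t : ℝ) (ζ : ℂ) : ℂ :=
  ((t ^ 2 : ℝ) + (1 - t ^ 2 : ℝ) * ζ ^ 2 : ℂ).sqrt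

section HalfPlane

variable {t : ℝ}

lemma halfPlaneSlitMap_one : halfPlaneSlitMap t 1 = 1 := by simp [halfPlaneSlitMap]

lemma isUnivalentOn_halfPlaneSlitMap (ht : |t| < 1) :
    IsUnivalentOn (halfPlaneSlitMap t) {ζ | 0 < ζ.re} :=
  have hpos : 0 < 1 - t ^ 2 := sub_pos.2 ((sq_lt_one_iff_abs_lt_one t).2 ht)
  isUnivalentOn_complexSqrt_slitPlane.comp
    ((isUnivalentOn_sq_re_pos.const_mul (ofReal_ne_zero.2 hpos.ne')).const_add _)
    fun _ hζ ↦ ofReal_add_ofReal_mul_mem_slitPlane (sq_nonneg t) hpos (mapsTo_sq_re_pos hζ)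

lemma mapsTo_halfPlaneSlitMap (ht : |t| < 1) :
    MapsTo (halfPlaneSlitMap t) {ζ | 0 < ζ.re} {ζ | 0 < ζ.re} := fun _ hζ ↦
  mapsTo_complexSqrt_slitPlane <| ofReal_add_ofReal_mul_mem_slitPlane (sq_nonneg t)
    (sub_pos.2 ((sq_lt_one_iff_abs_lt_one t).2 ht)) (mapsTo_sq_re_pos hζ)

lemma halfPlaneSlitMap_ne {ζ : ℂ} (ht : |t| < 1) (hζ : ζ ≠ 0) : halfPlaneSlitMap t ζ ≠ t := by
  intro h
  have hsq := congrArg (· ^ 2) h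
  simp only [halfPlaneSlitMap, complexSqrt_sq, ← ofReal_pow, add_eq_left, mul_eq_zero,
    ofReal_eq_zero, pow_eq_zero_iff two_ne_zero, hζ, or_false] at hsq
  linarith [(sq_lt_one_iff_abs_lt_one t).2 ht]

lemma hasDerivAt_halfPlaneSlitMap_one : HasDerivAt (halfPlaneSlitMap t) (1 - t ^ 2 : ℝ) 1 := by
  convert! (hasDerivAt_sqrt one_mem_slitPlane).comp_of_eq (1 : ℂ)
    (((hasDerivAt_pow 2 (1 : ℂ)).const_mul ((1 - t ^ 2 : ℝ) : ℂ)).const_add ((t ^ 2 : ℝ) : ℂ))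
    (by simp) using 1
  rw [one_cpow]
  push_cast
  ring

end HalfPlane

/-- The conformal map of the unit disc onto the unit disc slit along `[r, 1)`, fixing `0`,
for `0 < r < 1`. -/
noncomputable def slitMap (r : ℝ) : ℂ → ℂ := cayley ∘ halfPlaneSlitMap ((1 - r) / (1 + r)) ∘ cayley

lemma slitMap_zero (r : ℝ) : slitMap r 0 = 0 := by
  simp only [slitMap, Function.comp, cayley_zero, halfPlaneSlitMap_one, cayley_one]

section Disc

variable {r : ℝ}

lemma abs_one_sub_div_one_add_lt_one (hr : 0 < r) : |(1 - r) / (1 + r)| < 1 := by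
  rw [abs_lt, lt_div_iff₀ (by positivity), div_lt_one (by positivity)]
  constructor <;> linarith

lemma isUnivalentOn_slitMap (hr : 0 < r) : IsUnivalentOn (slitMap r) (ball 0 1) := by
  have ht := abs_one_sub_div_one_add_lt_one hr
  exact isUnivalentOn_cayley.comp
    ((isUnivalentOn_halfPlaneSlitMap ht).comp
      (isUnivalentOn_cayley.mono fun _ ↦ one_add_ne_zero_of_mem_ball) mapsTo_cayley_ball)
    fun _ hz ↦ one_add_ne_zero_of_re_pos (mapsTo_halfPlaneSlitMap ht (mapsTo_cayley_ball hz))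

lemma mapsTo_slitMap (hr : 0 < r) : MapsTo (slitMap r) (ball 0 1) (ball 0 1) :=
  mapsTo_cayley_re_pos.comp <|
    (mapsTo_halfPlaneSlitMap (abs_one_sub_div_one_add_lt_one hr)).comp mapsTo_cayley_ball

lemma slitMap_ne (hr : 0 < r) {z : ℂ} (hz : z ∈ ball 0 1) : slitMap r z ≠ r := by
  have ht := abs_one_sub_div_one_add_lt_one hr
  have hre : 0 < (cayley z).re := mapsTo_cayley_ball hz
  intro h
  refine halfPlaneSlitMap_ne (ζ := cayley z) ht (fun h0 ↦ hre.ne' (by rw [h0, zero_re])) ?_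
  have hζ := one_add_ne_zero_of_re_pos (mapsTo_halfPlaneSlitMap ht hre)
  rw [← cayley_cayley hζ, show cayley (halfPlaneSlitMap _ (cayley z)) = r from h, cayley]
  push_cast
  rfl

lemma hasDerivAt_slitMap_zero (hr : 0 < r) :
    HasDerivAt (slitMap r) (4 * r / (1 + r) ^ 2 : ℝ) 0 := by
  have hzero : HasDerivAt cayley (-2 : ℂ) 0 := by
    simpa using hasDerivAt_cayley (z := 0) (by simp)
  have hone : HasDerivAt cayley (-1 / 2 : ℂ) 1 := by
    convert! hasDerivAt_cayley (z := 1) (by norm_num) using 1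
    norm_num
  have hr1 : (1 + r : ℂ) ≠ 0 := by exact_mod_cast (by positivity : 1 + r ≠ 0)
  convert! hone.comp_of_eq 0
    (hasDerivAt_halfPlaneSlitMap_one.comp_of_eq 0 hzero cayley_zero.symm)
    (by simp only [Function.comp, cayley_zero, halfPlaneSlitMap_one]) using 1
  push_cast
  field_simp
  ring

end Disc

end SlitMap

/-! ### The Koebe growth theorem -/

section Growth

theorem IsUnivalentOn.norm_mul_norm_deriv_div_le {g : ℂ → ℂ} (hg : IsUnivalentOn g (ball 0 1))
    {w : ℂ} (hw : w ∈ ball 0 1) :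
    ‖w‖ * ‖deriv g 0‖ / (1 + ‖w‖) ^ 2 ≤ ‖g w - g 0‖ := by
  rcases eq_or_ne w 0 with rfl | hw0
  · simp
  have hr : 0 < ‖w‖ := norm_pos_iff.2 hw0
  obtain ⟨v, hv, hvw⟩ := exists_norm_mul_eq_self w
  have hv0 : v ≠ 0 := norm_ne_zero_iff.1 (hv ▸ one_ne_zero)
  have hmaps : MapsTo (fun z ↦ v * slitMap ‖w‖ z) (ball 0 1) (ball 0 1) := fun z hz ↦ by
    simpa [hv] using mapsTo_slitMap hr hz
  set h : ℂ → ℂ := g ∘ fun z ↦ v * slitMap ‖w‖ z with hh_def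
  have hh : IsUnivalentOn h (ball 0 1) := hg.comp ((isUnivalentOn_slitMap hr).const_mul hv0) hmaps
  have hh0 : h 0 = g 0 := by simp only [hh_def, Function.comp, slitMap_zero, mul_zero]
  have hderiv : HasDerivAt h (deriv g 0 * (v * (4 * ‖w‖ / (1 + ‖w‖) ^ 2 : ℝ))) 0 :=
    (hg.hasDerivAt (ball_mem_nhds 0 one_pos)).comp_of_eq 0
      ((hasDerivAt_slitMap_zero hr).const_mul v) (by rw [slitMap_zero, mul_zero])
  have homit : g w ∉ h '' ball 0 1 := by
    rintro ⟨z, hz, hzw⟩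
    have hvz : v * slitMap ‖w‖ z = v * ‖w‖ := (hg.injOn (hmaps hz) hw hzw).trans hvw.symm
    exact slitMap_ne hr hz (mul_left_cancel₀ hv0 hvz)
  have hquarter := hh.norm_deriv_le_four_mul_norm_sub homit
  rw [hderiv.deriv, hh0, norm_mul, norm_mul, hv, one_mul, norm_sub_rev (g 0), norm_real,
    Real.norm_of_nonneg (by positivity)] at hquarter
  linarith [show ‖deriv g 0‖ * (4 * ‖w‖ / (1 + ‖w‖) ^ 2) =
    4 * (‖w‖ * ‖deriv g 0‖ / (1 + ‖w‖) ^ 2) by ring]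

/-- The Koebe function `z ↦ z / (1 + z)²`, rotated so that its image is the plane slit along
`[1/4, ∞)`. -/
noncomputable def koebe (z : ℂ) : ℂ := z / (1 + z) ^ 2

lemma koebe_zero : koebe 0 = 0 := by simp [koebe]

lemma koebe_eq_cayley {z : ℂ} (hz : 1 + z ≠ 0) : koebe z = (1 - cayley z ^ 2) / 4 := by
  rw [koebe, cayley]
  field_simp
  ring

lemma norm_koebe_ofReal {r : ℝ} (hr : 0 ≤ r) : ‖koebe r‖ = r / (1 + r) ^ 2 := by
  have : koebe r = (r / (1 + r) ^ 2 : ℝ) := by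
    rw [koebe]
    push_cast
    rfl
  rw [this, norm_real, Real.norm_of_nonneg (by positivity)]

lemma hasDerivAt_koebe_zero : HasDerivAt koebe 1 0 := by
  convert! (hasDerivAt_id (0 : ℂ)).div (((hasDerivAt_id (0 : ℂ)).const_add 1).pow 2) (by simp)
    using 1
  simp

lemma isUnivalentOn_koebe : IsUnivalentOn koebe (ball 0 1) where
  differentiableOn z hz := by
    have hz1 : (1 + z) ^ 2 ≠ 0 := pow_ne_zero 2 (one_add_ne_zero_of_mem_ball hz)
    have hdiff : DifferentiableAt ℂ koebe z := .fun_div differentiableAt_fun_id (by fun_prop) hz1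
    exact hdiff.differentiableWithinAt
  injOn z hz w hw h := by
    rw [koebe_eq_cayley (one_add_ne_zero_of_mem_ball hz),
      koebe_eq_cayley (one_add_ne_zero_of_mem_ball hw)] at h
    have hsq : cayley z ^ 2 = cayley w ^ 2 := by linear_combination -4 * h
    exact isUnivalentOn_cayley.injOn (one_add_ne_zero_of_mem_ball hz)
      (one_add_ne_zero_of_mem_ball hw)
      (isUnivalentOn_sq_re_pos.injOn (mapsTo_cayley_ball hz) (mapsTo_cayley_ball hw) hsq)

end Growth

end

/-- Lower Pick growth bound for bounded univalent functions. -/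
theorem stmt9 (f : ℂ → ℂ) (hd : DifferentiableOn ℂ f (ball (0 : ℂ) 1))
    (hmaps : Set.MapsTo f (ball (0 : ℂ) 1) (ball (0 : ℂ) 1))
    (hinj : Set.InjOn f (ball (0 : ℂ) 1))
    (h0 : f 0 = 0) (w : ℂ) (hw : w ∈ ball (0 : ℂ) 1) (hw0 : w ≠ 0) :
    ‖w‖ * ‖deriv f 0‖ / (1 + ‖w‖) ^ 2 ≤ ‖f w‖ / (1 + ‖f w‖) ^ 2 := by
  have hf : IsUnivalentOn f (ball 0 1) := ⟨hd, hinj⟩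
  obtain ⟨u, hu, hufw⟩ := exists_norm_eq_mul_self (f w)
  have hu0 : u ≠ 0 := norm_ne_zero_iff.1 (hu ▸ one_ne_zero)
  set g : ℂ → ℂ := koebe ∘ fun z ↦ u * f z with hg_def
  have hg : IsUnivalentOn g (ball 0 1) := isUnivalentOn_koebe.comp (hf.const_mul hu0) fun z hz ↦ by
    simpa [hu] using hmaps hz
  have hg0 : g 0 = 0 := by simp only [hg_def, Function.comp, h0, mul_zero, koebe_zero]
  have hgw : ‖g w‖ = ‖f w‖ / (1 + ‖f w‖) ^ 2 := by
    rw [← norm_koebe_ofReal (norm_nonneg (f w)), hufw]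
    rfl
  have hg' : HasDerivAt g (1 * (u * deriv f 0)) 0 :=
    hasDerivAt_koebe_zero.comp_of_eq 0
      ((hf.hasDerivAt (ball_mem_nhds 0 one_pos)).const_mul u) (by rw [h0, mul_zero])
  have hgrowth := hg.norm_mul_norm_deriv_div_le hw
  rwa [hg'.deriv, hg0, sub_zero, hgw, norm_mul, norm_mul, hu, norm_one, one_mul, one_mul] at hgrowth
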